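/- Q_h(f) ≥ 0 for every f ∈ L²(0,∞) if and only if M₁ = 0 and, for every 1 ≤ m ≤ M₀, K_m = 0 and p_m > 0 (i.e. h(t) = Σ_{m=1}^{M₀} p_m e^{−α_m t} with α_m > 0 and p_m > 0). Likewise, Q_h(f) ≤ 0 for every f ∈ L²(0,∞) if and only if M₁ = 0 and, for every m, K_m = 0 and p_m < 0. -/

import Mathlib

open MeasureTheory Complex Polynomial

noncomputable section

/-- Lebesgue measure on the half-line `(0,∞)`. -/
abbrev halfLineMeasure : Measure ℝ := volume.restrict (Set.Ioi (0 : ℝ))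

/-- The Hankel quadratic form `Q_h(f) = ∫₀^∞∫₀^∞ h(t+s) f(s) conj(f(t)) ds dt`
(real-valued since `h` is real-valued). -/
def hankelForm (h : ℝ → ℂ) (f : Lp ℂ 2 halfLineMeasure) : ℝ :=
  (∫ t, (∫ s, h (t + s) * (f : ℝ → ℂ) s * starRingEnd ℂ ((f : ℝ → ℂ) t)
      ∂halfLineMeasure) ∂halfLineMeasure).re

/-- The finite-rank Hankel kernel `h(t) = Σ_{m=1}^{M} P_m(t) e^{−α_m t}`. -/
def frKernel (M : ℕ) (α : ℕ → ℂ) (P : ℕ → Polynomial ℂ) (t : ℝ) : ℂ :=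
  ∑ m ∈ Finset.Icc 1 M, (P m).eval (t : ℂ) * Complex.exp (-α m * t)

/-! For `h = ∑ a, Rₐ(t) e^{-at}`, the binomial theorem turns `Q_h(f)` into a Hermitian form in the
finitely many moments `x a j = ∫ s ^ j e^{-as} f(s) ds`. As the functions `s ^ j e^{-as}` are
linearly independent in `L²(0,∞)`, these moments can be prescribed arbitrarily, so the sign of `Q_h`
is that of the finite-dimensional form. If all exponents are real and all `Rₐ` are constants `pₐ`,
this form is `∑ a, pₐ |x a 0|²`. Otherwise some direction `(a, K)`, with `K = deg Rₐ`, is isotropic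
but pairs with `(conj a, 0)` through the leading coefficient of `Rₐ`. On the lines in this direction
through `(conj a, 0)` the form is affine and nonconstant, so it takes both signs. -/

section ExponentialPolynomials

/-- The operator `P ↦ P' + b P`. It describes differentiation of exponential polynomials:
`(d/dt + b) (P(t) e^{-at})` is `(P' + (b - a) P)(t) e^{-at}`. -/
def shiftedDerivative {R : Type*} [CommSemiring R] (b : R) : R[X] →ₗ[R] R[X] :=
  derivative + b • LinearMap.id

lemma shiftedDerivative_apply {R : Type*} [CommSemiring R] (b : R) (P : R[X]) :
    shiftedDerivative b P = derivative P + b • P := rfl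

lemma shiftedDerivative_zero {R : Type*} [CommSemiring R] :
    shiftedDerivative (0 : R) = derivative := by
  simp [shiftedDerivative]

lemma shiftedDerivative_injective {R : Type*} [CommRing R] [NoZeroDivisors R] {b : R}
    (hb : b ≠ 0) : Function.Injective (shiftedDerivative b) := by
  refine (injective_iff_map_eq_zero _).2 fun P hP => ?_
  have htop := congrArg (fun Q => coeff Q P.natDegree) hP
  simpa [shiftedDerivative_apply, coeff_derivative,
    coeff_eq_zero_of_natDegree_lt (Nat.lt_succ_self _), hb] using htop

lemma hasDerivAt_eval_mul_cexp (a : ℂ) (P : ℂ[X]) (t : ℝ) :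
    HasDerivAt (fun t : ℝ => P.eval (t : ℂ) * cexp (-a * t))
      ((shiftedDerivative (-a) P).eval (t : ℂ) * cexp (-a * t)) t := by
  have hcexp : HasDerivAt (fun z : ℂ => cexp (-a * z)) (cexp (-a * t) * (-a * 1)) (t : ℂ) :=
    ((hasDerivAt_id _).const_mul (-a)).cexp
  refine (((P.hasDerivAt _).mul hcexp).congr_deriv ?_).comp_ofReal
  simp only [shiftedDerivative_apply, eval_add, eval_smul, smul_eq_mul]
  ring

variable {S : Finset ℂ} {P : ℂ → ℂ[X]} {U : Set ℝ}

lemma sum_shiftedDerivative_mul_cexp_eq_zero (hU : IsOpen U) (b : ℂ)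
    (h : ∀ t ∈ U, ∑ a ∈ S, (P a).eval (t : ℂ) * cexp (-a * t) = 0) :
    ∀ t ∈ U, ∑ a ∈ S, (shiftedDerivative (b - a) (P a)).eval (t : ℂ) * cexp (-a * t) = 0 := by
  intro t ht
  have hderiv := HasDerivAt.fun_sum fun a (_ : a ∈ S) => hasDerivAt_eval_mul_cexp a (P a) t
  have hzero : HasDerivAt (fun t : ℝ => ∑ a ∈ S, (P a).eval (t : ℂ) * cexp (-a * t)) 0 t :=
    (hasDerivAt_const t (0 : ℂ)).congr_of_eventuallyEq
      (Filter.eventually_of_mem (hU.mem_nhds ht) h)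
  calc ∑ a ∈ S, (shiftedDerivative (b - a) (P a)).eval (t : ℂ) * cexp (-a * t)
      = (∑ a ∈ S, (shiftedDerivative (-a) (P a)).eval (t : ℂ) * cexp (-a * t))
          + b * ∑ a ∈ S, (P a).eval (t : ℂ) * cexp (-a * t) := by
        rw [Finset.mul_sum, ← Finset.sum_add_distrib]
        refine Finset.sum_congr rfl fun a _ => ?_
        simp only [shiftedDerivative_apply, eval_add, eval_smul, smul_eq_mul]
        ring
    _ = 0 := by rw [hderiv.unique hzero, h t ht, mul_zero, add_zero]

lemma sum_iterate_shiftedDerivative_mul_cexp_eq_zero (hU : IsOpen U) (b : ℂ) (n : ℕ)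
    (h : ∀ t ∈ U, ∑ a ∈ S, (P a).eval (t : ℂ) * cexp (-a * t) = 0) :
    ∀ t ∈ U, ∑ a ∈ S, ((shiftedDerivative (b - a))^[n] (P a)).eval (t : ℂ) * cexp (-a * t) = 0 := by
  induction n with
  | zero => exact h
  | succ n ih =>
    simp only [Function.iterate_succ_apply']
    exact sum_shiftedDerivative_mul_cexp_eq_zero hU b ih

lemma polynomial_eq_zero_of_eval_ofReal_eq_zero (hU : IsOpen U) (hne : U.Nonempty) {P : ℂ[X]}
    (h : ∀ t ∈ U, P.eval (t : ℂ) = 0) : P = 0 := by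
  obtain ⟨t, ht⟩ := hne
  have hinf : ((↑) '' U : Set ℂ).Infinite :=
    (infinite_of_mem_nhds t (hU.mem_nhds ht)).image ofReal_injective.injOn
  exact P.eq_zero_of_infinite_isRoot (hinf.mono (Set.forall_mem_image.2 h))

theorem eq_zero_of_sum_eval_mul_cexp_eq_zero (hU : IsOpen U) (hne : U.Nonempty)
    (h : ∀ t ∈ U, ∑ a ∈ S, (P a).eval (t : ℂ) * cexp (-a * t) = 0) : ∀ a ∈ S, P a = 0 := by
  induction S using Finset.induction_on generalizing P with
  | empty => simp
  | insert b S hb ih =>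
    have hS : ∀ a ∈ S, P a = 0 := by
      intro a ha
      -- `(d/dt + b) ^ (deg P_b + 1)` kills `P_b(t) e^{-bt}` and is injective on the other terms.
      have hkill := sum_iterate_shiftedDerivative_mul_cexp_eq_zero hU b ((P b).natDegree + 1) h
      simp only [Finset.sum_insert hb, sub_self, shiftedDerivative_zero,
        iterate_derivative_eq_zero (Nat.lt_succ_self _), eval_zero, zero_mul, zero_add] at hkill
      have hba : b - a ≠ 0 := sub_ne_zero.2 fun hba => hb (hba ▸ ha)
      refine ((shiftedDerivative_injective hba).iterate ((P b).natDegree + 1)) ?_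
      rw [ih hkill a ha, iterate_map_zero]
    have hPb : P b = 0 := by
      refine polynomial_eq_zero_of_eval_ofReal_eq_zero hU hne fun t ht => ?_
      have hsum := h t ht
      rw [Finset.sum_insert hb, Finset.sum_eq_zero fun a ha => by rw [hS a ha]; simp] at hsum
      simpa using hsum
    exact Finset.forall_mem_insert _ _ _ |>.2 ⟨hPb, hS⟩

end ExponentialPolynomials

section BinomialForm

open Finset.HasAntidiagonal

variable {R : Type*} [CommSemiring R]

/-- The bilinear form `∑ n, Pₙ ∑_{j + k = n} (n choose j) xⱼ yₖ` on sequences, which is what becomes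
of `P(s + t)` when every `s ^ j` is replaced by `xⱼ` and every `t ^ k` by `yₖ`. -/
def binomialForm (P : R[X]) (x y : ℕ → R) : R :=
  P.sum fun n c => c * ∑ p ∈ antidiagonal n, n.choose p.1 * (x p.1 * y p.2)

lemma binomialForm_comm (P : R[X]) (x y : ℕ → R) : binomialForm P x y = binomialForm P y x := by
  refine Finset.sum_congr rfl fun n _ => congrArg _ ?_
  rw [← Finset.Nat.sum_antidiagonal_swap]
  refine Finset.sum_congr rfl fun p hp => ?_
  rw [← mem_antidiagonal.1 hp]
  simp only [Prod.fst_swap, Prod.snd_swap]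
  rw [Nat.choose_symm_add, mul_comm (x _)]

lemma binomialForm_add_left (P : R[X]) (x x' y : ℕ → R) :
    binomialForm P (x + x') y = binomialForm P x y + binomialForm P x' y := by
  simp only [binomialForm, Polynomial.sum, Pi.add_apply, add_mul, mul_add, Finset.sum_add_distrib]

lemma binomialForm_add_right (P : R[X]) (x y y' : ℕ → R) :
    binomialForm P x (y + y') = binomialForm P x y + binomialForm P x y' := by
  simp only [binomialForm_comm P x, binomialForm_add_left]

lemma binomialForm_zero_left (P : R[X]) (y : ℕ → R) : binomialForm P 0 y = 0 := by
  simp [binomialForm, Polynomial.sum]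

lemma binomialForm_zero_right (P : R[X]) (x : ℕ → R) : binomialForm P x 0 = 0 := by
  rw [binomialForm_comm, binomialForm_zero_left]

lemma binomialForm_congr {P : R[X]} {x x' y y' : ℕ → R} (hx : ∀ j ≤ P.natDegree, x j = x' j)
    (hy : ∀ k ≤ P.natDegree, y k = y' k) : binomialForm P x y = binomialForm P x' y' := by
  refine Finset.sum_congr rfl fun n hn => congrArg _ (Finset.sum_congr rfl fun p hp => ?_)
  have hn := le_natDegree_of_mem_supp n hn
  rw [hx _ ((antidiagonal.fst_le hp).trans hn),
    hy _ ((antidiagonal.snd_le hp).trans hn)]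

lemma binomialForm_C (c : R) (x y : ℕ → R) : binomialForm (C c) x y = c * (x 0 * y 0) := by
  simp [binomialForm]

lemma binomialForm_single_single (P : R[X]) (j k : ℕ) (u v : R) :
    binomialForm P (Pi.single j u) (Pi.single k v) =
      (j + k).choose j * P.coeff (j + k) * (u * v) := by
  have hprod (p : ℕ × ℕ) : (Pi.single j u : ℕ → R) p.1 * (Pi.single k v : ℕ → R) p.2 =
      if p = (j, k) then u * v else 0 := by
    simp only [Pi.single_apply, Prod.ext_iff, ite_zero_mul_ite_zero]
  simp only [binomialForm, Polynomial.sum, hprod, mul_ite, mul_zero, Finset.sum_ite_eq',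
    mem_antidiagonal, Finset.sum_ite_eq, mem_support_iff]
  split_ifs with h
  · ring
  · rw [notMem_support_iff.1 h]; simp

lemma binomialForm_mul_pow (P : R[X]) (u v s t : R) :
    binomialForm P (fun j => u * s ^ j) (fun k => v * t ^ k) = u * v * P.eval (s + t) := by
  simp only [binomialForm, Polynomial.sum, eval_eq_sum, (Commute.all s t).add_pow', Finset.mul_sum,
    nsmul_eq_mul]
  refine Finset.sum_congr rfl fun n _ => Finset.sum_congr rfl fun p _ => ?_
  ring

end BinomialForm

section MomentForm

open scoped ComplexConjugate

/-- The invariance of a family of polynomials indexed by exponents under simultaneous complex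
conjugation of the exponents and of the coefficients; it says that the exponential polynomial
`∑ a, Rₐ(t) e^{-at}` is real-valued. -/
def IsConjInvariant (R : ℂ →₀ ℂ[X]) : Prop :=
  ∀ a, R (conj a) = (R a).map (starRingEnd ℂ)

lemma IsConjInvariant.neg {R : ℂ →₀ ℂ[X]} (hR : IsConjInvariant R) : IsConjInvariant (-R) := by
  intro a
  simp [hR a]

lemma IsConjInvariant.conj_mem_support {R : ℂ →₀ ℂ[X]} (hR : IsConjInvariant R) {a : ℂ}
    (ha : a ∈ R.support) : conj a ∈ R.support := by
  rw [Finsupp.mem_support_iff] at ha ⊢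
  rwa [hR a, Ne, Polynomial.map_eq_zero]

/-- The sesquilinear form to which the Hankel form with kernel `∑ a, Rₐ(t) e^{-at}` reduces on the
moments `x a j = ∫ s ^ j e^{-as} f(s) ds`. The exponent `a` is paired with `conj a` because
conjugating `f` conjugates the exponents of its moments. -/
def momentForm (R : ℂ →₀ ℂ[X]) (x y : ℂ → ℕ → ℂ) : ℂ :=
  R.sum fun a P => binomialForm P (x a) (star (y (conj a)))

variable {R : ℂ →₀ ℂ[X]}

lemma momentForm_add_left (x x' y : ℂ → ℕ → ℂ) :
    momentForm R (x + x') y = momentForm R x y + momentForm R x' y := by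
  simp only [momentForm, Pi.add_apply, binomialForm_add_left, Finsupp.sum_add]

lemma momentForm_add_right (x y y' : ℂ → ℕ → ℂ) :
    momentForm R x (y + y') = momentForm R x y + momentForm R x y' := by
  simp only [momentForm, Pi.add_apply, star_add, binomialForm_add_right, Finsupp.sum_add]

lemma momentForm_single_single (a b : ℂ) (j k : ℕ) (u v : ℂ) :
    momentForm R (Pi.single a (Pi.single j u)) (Pi.single b (Pi.single k v)) =
      if conj a = b then (j + k).choose j * (R a).coeff (j + k) * (u * conj v) else 0 := by
  rw [momentForm, Finsupp.sum_eq_single a]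
  · split_ifs with h
    · subst h
      simp [binomialForm_single_single]
    · simp [h, binomialForm_zero_right]
  · intro c _ hc
    simp [hc, binomialForm_zero_left]
  · simp [binomialForm]

/-- Moments at which, with `K = deg Rₐ`, the form takes negative values unless `a` is real and
`K = 0`: the moment of `s ^ K e^{-as}` is `z`, that of `e^{-conj(a)s}` is `1`, the others vanish.
The first of these two directions is isotropic, so that the form is affine in `z`. -/
def testMoments (a : ℂ) (K : ℕ) (z : ℂ) : ℂ → ℕ → ℂ :=
  Pi.single a (Pi.single K z) + Pi.single (conj a) (Pi.single 0 1)

lemma momentForm_testMoments (hR : IsConjInvariant R) {a : ℂ}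
    (h : ¬(a.im = 0 ∧ (R a).natDegree = 0)) (z : ℂ) :
    momentForm R (testMoments a (R a).natDegree z) (testMoments a (R a).natDegree z) =
      momentForm R (Pi.single (conj a) (Pi.single 0 1)) (Pi.single (conj a) (Pi.single 0 1)) +
        ((R a).leadingCoeff * z + conj ((R a).leadingCoeff * z)) := by
  have hisotropic : momentForm R (Pi.single a (Pi.single (R a).natDegree z))
      (Pi.single a (Pi.single (R a).natDegree z)) = 0 := by
    rw [momentForm_single_single]
    split_ifs with ha
    · have hK : (R a).natDegree ≠ 0 := fun hK => h ⟨conj_eq_iff_im.1 ha, hK⟩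
      rw [coeff_eq_zero_of_natDegree_lt (by lia), mul_zero, zero_mul]
    · rfl
  simp only [testMoments, momentForm_add_left, momentForm_add_right, hisotropic]
  simp [momentForm_single_single, hR a]
  ring

lemma exists_re_momentForm_neg (hR : IsConjInvariant R) {a : ℂ} (ha : a ∈ R.support)
    (h : ¬(a.im = 0 ∧ (R a).natDegree = 0)) : ∃ x, (momentForm R x x).re < 0 := by
  have hp : (R a).leadingCoeff ≠ 0 := leadingCoeff_ne_zero.2 (Finsupp.mem_support_iff.1 ha)
  set c := (momentForm R (Pi.single (conj a) (Pi.single 0 1))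
    (Pi.single (conj a) (Pi.single 0 1))).re with hc
  refine ⟨testMoments a (R a).natDegree (((-(|c| + 1) : ℝ) : ℂ) / (R a).leadingCoeff), ?_⟩
  rw [momentForm_testMoments hR h, mul_div_cancel₀ _ hp, conj_ofReal, add_re, ← hc, ← ofReal_add,
    ofReal_re]
  linarith [le_abs_self c, abs_nonneg c]

theorem forall_re_momentForm_nonneg_iff (hR : IsConjInvariant R) :
    (∀ x, 0 ≤ (momentForm R x x).re) ↔
      ∀ a ∈ R.support, a.im = 0 ∧ (R a).natDegree = 0 ∧ 0 < (R a).leadingCoeff.re := by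
  constructor
  · intro hnonneg a ha
    obtain ⟨him, hdeg⟩ : a.im = 0 ∧ (R a).natDegree = 0 := by
      by_contra h
      obtain ⟨x, hx⟩ := exists_re_momentForm_neg hR ha h
      exact (hnonneg x).not_gt hx
    have haconj : conj a = a := conj_eq_iff_im.2 him
    have hreal : (R a).leadingCoeff.im = 0 := by
      rw [← conj_eq_iff_im, ← leadingCoeff_map (starRingEnd ℂ), ← hR a, haconj]
    have hne : (R a).leadingCoeff.re ≠ 0 := fun hre =>
      leadingCoeff_ne_zero.2 (Finsupp.mem_support_iff.1 ha) (Complex.ext hre hreal)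
    have hle := hnonneg (Pi.single a (Pi.single 0 1))
    rw [momentForm_single_single, if_pos haconj] at hle
    exact ⟨him, hdeg, hne.symm.lt_of_le (by simpa [leadingCoeff, hdeg] using hle)⟩
  · intro h x
    rw [momentForm, Finsupp.sum, re_sum]
    refine Finset.sum_nonneg fun a ha => ?_
    obtain ⟨him, hdeg, hpos⟩ := h a ha
    rw [leadingCoeff, hdeg] at hpos
    rw [eq_C_of_natDegree_eq_zero hdeg, binomialForm_C, conj_eq_iff_im.2 him, Pi.star_apply,
      ← starRingEnd_apply, mul_conj, re_mul_ofReal]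
    exact mul_nonneg hpos.le (normSq_nonneg _)

end MomentForm

section LaplaceMoments

open scoped ComplexConjugate

/-- The function `s ↦ s ^ j e^{-as}`. -/
def expMonomial (a : ℂ) (j : ℕ) (s : ℝ) : ℂ := (s : ℂ) ^ j * cexp (-a * s)

lemma continuous_expMonomial (a : ℂ) (j : ℕ) : Continuous (expMonomial a j) := by
  unfold expMonomial
  fun_prop

lemma norm_expMonomial_sq {s : ℝ} (hs : 0 ≤ s) (a : ℂ) (j : ℕ) :
    ‖expMonomial a j s‖ ^ 2 = s ^ (2 * j) * Real.exp (-(2 * a.re) * s) := by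
  rw [expMonomial, norm_mul, norm_pow, norm_real, Real.norm_of_nonneg hs, norm_exp, mul_pow,
    ← pow_mul, mul_comm j, ← Real.exp_nat_mul]
  congr 2
  simp
  ring

lemma memLp_expMonomial {a : ℂ} (ha : 0 < a.re) (j : ℕ) :
    MemLp (expMonomial a j) 2 halfLineMeasure := by
  rw [memLp_two_iff_integrable_sq_norm (continuous_expMonomial a j).aestronglyMeasurable]
  have hgamma := integrableOn_rpow_mul_exp_neg_mul_rpow (s := (2 * j : ℕ)) (b := 2 * a.re)
    (neg_one_lt_zero.trans_le (Nat.cast_nonneg _)) one_pos (by positivity)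
  refine (integrableOn_congr_fun (fun s hs => ?_) measurableSet_Ioi).1 hgamma
  rw [norm_expMonomial_sq (le_of_lt hs), Real.rpow_natCast, Real.rpow_one]

lemma conj_expMonomial (a : ℂ) (j : ℕ) (s : ℝ) :
    conj (expMonomial a j s) = expMonomial (conj a) j s := by
  simp [expMonomial, ← exp_conj]

/-- The moments `∫₀^∞ s ^ j e^{-as} f(s) ds`, up to sign the derivatives at `a` of the Laplace
transform of `f`. They are only meaningful for `0 < a.re`. -/
def laplaceMoment (f : Lp ℂ 2 halfLineMeasure) (a : ℂ) (j : ℕ) : ℂ :=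
  ∫ s, expMonomial a j s * f s ∂halfLineMeasure

lemma integrable_expMonomial_mul {a : ℂ} (ha : 0 < a.re) (j : ℕ)
    (f : Lp ℂ 2 halfLineMeasure) :
    Integrable (fun s => expMonomial a j s * f s) halfLineMeasure :=
  (memLp_expMonomial ha j).integrable_mul (Lp.memLp f)

lemma integrable_expMonomial_mul_conj {a : ℂ} (ha : 0 < a.re) (j : ℕ)
    (f : Lp ℂ 2 halfLineMeasure) :
    Integrable (fun s => expMonomial a j s * conj (f s)) halfLineMeasure :=
  (memLp_expMonomial ha j).integrable_mul (Lp.memLp f).star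

lemma integral_expMonomial_mul_conj (f : Lp ℂ 2 halfLineMeasure) (a : ℂ) (j : ℕ) :
    ∫ s, expMonomial a j s * conj (f s) ∂halfLineMeasure = conj (laplaceMoment f (conj a) j) := by
  simp only [laplaceMoment, ← integral_conj, map_mul, conj_expMonomial, conj_conj]

/-- The functions `s ^ j e^{-as}` with `0 < a.re`, as vectors of `L²(0,∞)`. -/
def expMonomialLp (i : {a : ℂ // 0 < a.re} × ℕ) : Lp ℂ 2 halfLineMeasure :=
  (memLp_expMonomial i.1.2 i.2).toLp

lemma coeFn_expMonomialLp (i : {a : ℂ // 0 < a.re} × ℕ) :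
    expMonomialLp i =ᵐ[halfLineMeasure] expMonomial i.1 i.2 :=
  MemLp.coeFn_toLp _

lemma inner_star_expMonomialLp (f : Lp ℂ 2 halfLineMeasure) (i : {a : ℂ // 0 < a.re} × ℕ) :
    inner ℂ (star f) (expMonomialLp i) = laplaceMoment f i.1 i.2 := by
  rw [L2.inner_def, laplaceMoment]
  refine integral_congr_ae ?_
  filter_upwards [Lp.coeFn_star f, coeFn_expMonomialLp i] with s hf he
  rw [hf, he]
  simp

/-- The exponential polynomial `∑ a, Rₐ(t) e^{-at}`, parametrized by the polynomials `Rₐ` belonging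
to its exponents. -/
def expPolyKernel (R : ℂ →₀ ℂ[X]) (t : ℝ) : ℂ :=
  R.sum fun a P => P.eval (t : ℂ) * cexp (-a * t)

lemma expPolyKernel_neg (R : ℂ →₀ ℂ[X]) (t : ℝ) : expPolyKernel (-R) t = -expPolyKernel R t := by
  simp [expPolyKernel, Finsupp.sum]

lemma expPolyKernel_sum_single {ι : Type*} (S : Finset ι) (α : ι → ℂ) (P : ι → ℂ[X]) (t : ℝ) :
    expPolyKernel (∑ m ∈ S, Finsupp.single (α m) (P m)) t =
      ∑ m ∈ S, (P m).eval (t : ℂ) * cexp (-α m * t) := by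
  rw [expPolyKernel, ← Finsupp.sum_finsetSum_index (by simp) (by simp [add_mul])]
  simp

theorem eq_zero_of_expPolyKernel_eq_zero {R : ℂ →₀ ℂ[X]} {U : Set ℝ} (hU : IsOpen U)
    (hne : U.Nonempty) (h : ∀ t ∈ U, expPolyKernel R t = 0) : R = 0 := by
  ext1 a
  by_cases ha : a ∈ R.support
  · exact eq_zero_of_sum_eval_mul_cexp_eq_zero hU hne h a ha
  · exact Finsupp.notMem_support_iff.1 ha

lemma coeFn_sum_smul_expMonomialLp (s : Finset ({a : ℂ // 0 < a.re} × ℕ))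
    (c : {a : ℂ // 0 < a.re} × ℕ → ℂ) :
    (∑ i ∈ s, c i • expMonomialLp i : Lp ℂ 2 halfLineMeasure) =ᵐ[halfLineMeasure]
      expPolyKernel (∑ i ∈ s, Finsupp.single i.1.1 (monomial i.2 (c i))) := by
  have hterm : ∀ᵐ t ∂halfLineMeasure, ∀ i ∈ s,
      (c i • expMonomialLp i : Lp ℂ 2 halfLineMeasure) t = c i * expMonomial i.1 i.2 t := by
    rw [Filter.eventually_all_finset]
    intro i _
    filter_upwards [Lp.coeFn_smul (c i) (expMonomialLp i), coeFn_expMonomialLp i] with t hsmul hi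
    rw [hsmul, Pi.smul_apply, hi, smul_eq_mul]
  filter_upwards [Lp.coeFn_finsetSum s fun i => c i • expMonomialLp i, hterm] with t hsum hterm
  rw [hsum, Finset.sum_apply, Finset.sum_congr rfl hterm, expPolyKernel_sum_single]
  simp only [expMonomial, eval_monomial, mul_assoc]

lemma coeff_sum_single_monomial {R A ι : Type*} [Semiring R] {e : ι → A × ℕ}
    (he : Function.Injective e) {s : Finset ι} (c : ι → R) {i : ι} (hi : i ∈ s) :
    ((∑ k ∈ s, Finsupp.single (e k).1 (monomial (e k).2 (c k))) (e i).1).coeff (e i).2 = c i := by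
  classical
  rw [Finsupp.finsetSum_apply, finsetSum_coeff, Finset.sum_eq_single_of_mem i hi]
  · simp
  · intro k _ hne
    rw [Finsupp.single_apply]
    split_ifs with hk
    · exact coeff_monomial_of_ne _ fun h => hne (he (Prod.ext hk h.symm))
    · rfl

theorem linearIndependent_expMonomialLp : LinearIndependent ℂ expMonomialLp := by
  rw [linearIndependent_iff']
  intro s c hc i hi
  let R : ℂ →₀ ℂ[X] := ∑ i ∈ s, Finsupp.single i.1.1 (monomial i.2 (c i))
  have hRae : expPolyKernel R =ᵐ[volume.restrict (Set.Ioi 0)] fun _ => 0 :=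
    (coeFn_sum_smul_expMonomialLp s c).symm.trans (hc ▸ Lp.coeFn_zero ℂ 2 halfLineMeasure)
  have hRcont : Continuous (expPolyKernel R) := by
    unfold expPolyKernel Finsupp.sum
    fun_prop
  have hR0 : R = 0 := eq_zero_of_expPolyKernel_eq_zero isOpen_Ioi Set.nonempty_Ioi
    (Measure.eqOn_open_of_ae_eq hRae isOpen_Ioi hRcont.continuousOn continuousOn_const)
  have hcoeff : (R i.1).coeff i.2 = c i :=
    coeff_sum_single_monomial (Subtype.val_injective.prodMap Function.injective_id) c hi
  rw [← hcoeff, hR0, Finsupp.zero_apply, coeff_zero]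

lemma exists_inner_eq_of_linearIndependent {𝕜 E ι : Type*} [RCLike 𝕜] [NormedAddCommGroup E]
    [InnerProductSpace 𝕜 E] [Finite ι] {v : ι → E} (hv : LinearIndependent 𝕜 v) (c : ι → 𝕜) :
    ∃ x : E, ∀ i, inner 𝕜 x (v i) = c i := by
  have := FiniteDimensional.span_of_finite 𝕜 (Set.finite_range v)
  have := FiniteDimensional.complete 𝕜 (Submodule.span 𝕜 (Set.range v))
  let φ := ((Module.Basis.span hv).constr 𝕜 c).toContinuousLinearMap
  refine ⟨((InnerProductSpace.toDual 𝕜 (Submodule.span 𝕜 (Set.range v))).symm φ : E), fun i => ?_⟩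
  rw [← Module.Basis.coe_span_apply hv, ← Submodule.coe_inner, InnerProductSpace.toDual_symm_apply]
  exact Module.Basis.constr_basis _ _ _ _

theorem exists_laplaceMoment_eq {S : Finset ℂ} (hS : ∀ a ∈ S, 0 < a.re) (N : ℕ)
    (c : ℂ → ℕ → ℂ) :
    ∃ f : Lp ℂ 2 halfLineMeasure, ∀ a ∈ S, ∀ j ≤ N, laplaceMoment f a j = c a j := by
  let index (i : S × Fin (N + 1)) : {a : ℂ // 0 < a.re} × ℕ := (⟨i.1, hS i.1 i.1.2⟩, i.2)
  have hindex : Function.Injective index := by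
    rintro ⟨a, j⟩ ⟨b, k⟩ h
    rw [Prod.mk.injEq, Subtype.mk.injEq] at h
    exact Prod.ext (Subtype.ext h.1) (Fin.ext h.2)
  obtain ⟨x, hx⟩ := exists_inner_eq_of_linearIndependent
    (linearIndependent_expMonomialLp.comp index hindex) fun i => c i.1 i.2
  refine ⟨star x, fun a ha j hj => ?_⟩
  rw [← hx (⟨a, ha⟩, ⟨j, Nat.lt_succ_of_le hj⟩), Function.comp_apply, ← star_star x,
    inner_star_expMonomialLp, star_star]

end LaplaceMoments

section HankelForm

open scoped ComplexConjugate

variable {𝕜 X : Type*} [RCLike 𝕜] [MeasurableSpace X] {μ : Measure X} {u : ℕ → X → 𝕜}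

lemma integrable_binomialForm_left (hu : ∀ j, Integrable (u j) μ) (P : 𝕜[X]) (y : ℕ → 𝕜) :
    Integrable (fun s => binomialForm P (fun j => u j s) y) μ :=
  integrable_finsetSum _ fun _ _ => (integrable_finsetSum _ fun _ _ =>
    ((hu _).mul_const _).const_mul _).const_mul _

lemma integral_binomialForm_left (hu : ∀ j, Integrable (u j) μ) (P : 𝕜[X]) (y : ℕ → 𝕜) :
    ∫ s, binomialForm P (fun j => u j s) y ∂μ = binomialForm P (fun j => ∫ s, u j s ∂μ) y := by
  have hterm (p : ℕ × ℕ) (n : ℕ) : Integrable (fun s => n.choose p.1 * (u p.1 s * y p.2)) μ :=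
    ((hu _).mul_const _).const_mul _
  simp only [binomialForm, Polynomial.sum]
  rw [integral_finsetSum _ fun n _ => (integrable_finsetSum _ fun p _ => hterm p n).const_mul _]
  simp only [integral_const_mul, integral_finsetSum _ fun p _ => hterm p _, integral_mul_const]

lemma integral_sum_binomialForm_left {R : 𝕜 →₀ 𝕜[X]} {u : 𝕜 → ℕ → X → 𝕜}
    (hu : ∀ a ∈ R.support, ∀ j, Integrable (u a j) μ) (y : 𝕜 → ℕ → 𝕜) :
    ∫ s, R.sum (fun a P => binomialForm P (fun j => u a j s) (y a)) ∂μ =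
      R.sum fun a P => binomialForm P (fun j => ∫ s, u a j s ∂μ) (y a) := by
  simp only [Finsupp.sum]
  rw [integral_finsetSum _ fun a ha => integrable_binomialForm_left (hu a ha) _ _]
  exact Finset.sum_congr rfl fun a ha => integral_binomialForm_left (hu a ha) _ _

variable {R : ℂ →₀ ℂ[X]}

lemma expPolyKernel_add_mul_mul (R : ℂ →₀ ℂ[X]) (s t : ℝ) (u v : ℂ) :
    expPolyKernel R (t + s) * u * v = R.sum fun a P =>
      binomialForm P (fun j => expMonomial a j s * u) (fun k => expMonomial a k t * v) := by
  simp only [expPolyKernel, Finsupp.sum, Finset.sum_mul]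
  refine Finset.sum_congr rfl fun a _ => ?_
  have hexp : cexp (-a * (t + s)) = cexp (-a * s) * cexp (-a * t) := by
    rw [← Complex.exp_add]
    ring_nf
  have hmonomial (z w : ℂ) (r : ℝ) (j : ℕ) : (r : ℂ) ^ j * z * w = z * w * (r : ℂ) ^ j := by ring
  simp only [expMonomial, hmonomial]
  rw [binomialForm_mul_pow, ofReal_add, hexp, add_comm (t : ℂ)]
  ring

theorem hankelForm_expPolyKernel (hre : ∀ a ∈ R.support, 0 < a.re)
    (f : Lp ℂ 2 halfLineMeasure) :
    hankelForm (expPolyKernel R) f = (momentForm R (laplaceMoment f) (laplaceMoment f)).re := by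
  have hinner (t : ℝ) :
      ∫ s, expPolyKernel R (t + s) * f s * conj (f t) ∂halfLineMeasure = R.sum fun a P =>
        binomialForm P (fun k => expMonomial a k t * conj (f t)) (laplaceMoment f a) := by
    simp only [expPolyKernel_add_mul_mul]
    rw [integral_sum_binomialForm_left fun a ha j => integrable_expMonomial_mul (hre a ha) j f]
    exact Finset.sum_congr rfl fun a _ => binomialForm_comm _ _ _
  simp only [hankelForm, hinner]
  rw [integral_sum_binomialForm_left fun a ha k => integrable_expMonomial_mul_conj (hre a ha) k f]
  simp only [integral_expMonomial_mul_conj]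
  exact congrArg re (Finset.sum_congr rfl fun a _ => binomialForm_comm _ _ _)

theorem hankelForm_nonneg_iff (hre : ∀ a ∈ R.support, 0 < a.re) (hR : IsConjInvariant R) :
    (∀ f, 0 ≤ hankelForm (expPolyKernel R) f) ↔
      ∀ a ∈ R.support, a.im = 0 ∧ (R a).natDegree = 0 ∧ 0 < (R a).leadingCoeff.re := by
  simp only [hankelForm_expPolyKernel hre, ← forall_re_momentForm_nonneg_iff hR]
  refine ⟨fun h x => ?_, fun h f => h _⟩
  obtain ⟨f, hf⟩ := exists_laplaceMoment_eq hre (R.support.sup fun a => (R a).natDegree) x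
  have hdeg {a : ℂ} (ha : a ∈ R.support) :
      (R a).natDegree ≤ R.support.sup fun a => (R a).natDegree :=
    Finset.le_sup (f := fun a => (R a).natDegree) ha
  convert h f using 2
  refine Finset.sum_congr rfl fun a ha => binomialForm_congr (fun j hj => ?_) fun k hk => ?_
  · rw [hf a ha j (hj.trans (hdeg ha))]
  · rw [Pi.star_apply, Pi.star_apply, hf _ (hR.conj_mem_support ha) k (hk.trans (hdeg ha))]

theorem hankelForm_nonpos_iff (hre : ∀ a ∈ R.support, 0 < a.re) (hR : IsConjInvariant R) :
    (∀ f, hankelForm (expPolyKernel R) f ≤ 0) ↔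
      ∀ a ∈ R.support, a.im = 0 ∧ (R a).natDegree = 0 ∧ (R a).leadingCoeff.re < 0 := by
  have hneg (f : Lp ℂ 2 halfLineMeasure) :
      hankelForm (expPolyKernel (-R)) f = -hankelForm (expPolyKernel R) f := by
    simp only [hankelForm, expPolyKernel_neg, neg_mul, integral_neg, neg_re]
  simpa [hneg] using hankelForm_nonneg_iff (R := -R) (by simpa using hre) hR.neg

end HankelForm

section Indexing

open scoped ComplexConjugate

variable {ι : Type*} {S : Finset ι} {α : ι → ℂ} {P : ι → ℂ[X]}

lemma sum_single_apply_of_injOn (hα : Set.InjOn α S) {m : ι} (hm : m ∈ S) :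
    (∑ n ∈ S, Finsupp.single (α n) (P n)) (α m) = P m := by
  rw [Finsupp.finsetSum_apply, Finset.sum_eq_single_of_mem m hm, Finsupp.single_eq_same]
  intro n hn hnm
  exact Finsupp.single_eq_of_ne fun h => hnm (hα hn hm h.symm)

lemma exists_of_mem_support_sum_single {a : ℂ}
    (ha : a ∈ (∑ m ∈ S, Finsupp.single (α m) (P m)).support) : ∃ m ∈ S, α m = a := by
  rw [Finsupp.mem_support_iff, Finsupp.finsetSum_apply] at ha
  obtain ⟨m, hm, hne⟩ := Finset.exists_ne_zero_of_sum_ne_zero ha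
  exact ⟨m, hm, by_contra fun h => hne (Finsupp.single_eq_of_ne' h)⟩

lemma forall_mem_support_sum_single_iff (hα : Set.InjOn α S) (hP : ∀ m ∈ S, P m ≠ 0)
    {p : ℂ → ℂ[X] → Prop} :
    (∀ a ∈ (∑ m ∈ S, Finsupp.single (α m) (P m)).support,
      p a ((∑ m ∈ S, Finsupp.single (α m) (P m)) a)) ↔ ∀ m ∈ S, p (α m) (P m) := by
  constructor
  · intro h m hm
    have hRm := sum_single_apply_of_injOn (P := P) hα hm
    rw [← hRm]
    exact h _ (Finsupp.mem_support_iff.2 (hRm ▸ hP m hm))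
  · intro h a ha
    obtain ⟨m, hm, rfl⟩ := exists_of_mem_support_sum_single ha
    rw [sum_single_apply_of_injOn hα hm]
    exact h m hm

lemma isConjInvariant_sum_single (hα : Set.InjOn α S)
    (hconj : ∀ m ∈ S, ∃ n ∈ S, α n = conj (α m) ∧ P n = (P m).map (starRingEnd ℂ)) :
    IsConjInvariant (∑ m ∈ S, Finsupp.single (α m) (P m)) := by
  intro a
  by_cases ha : ∃ m ∈ S, α m = a
  · obtain ⟨m, hm, rfl⟩ := ha
    obtain ⟨n, hn, hαn, hPn⟩ := hconj m hm
    rw [← hαn, sum_single_apply_of_injOn hα hn, sum_single_apply_of_injOn hα hm, hPn]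
  · have ha' : ¬∃ m ∈ S, α m = conj a := by
      rintro ⟨m, hm, hma⟩
      obtain ⟨n, hn, hαn, -⟩ := hconj m hm
      exact ha ⟨n, hn, by rw [hαn, hma, conj_conj]⟩
    rw [Finsupp.notMem_support_iff.1 (mt exists_of_mem_support_sum_single ha),
      Finsupp.notMem_support_iff.1 (mt exists_of_mem_support_sum_single ha'), Polynomial.map_zero]

lemma exists_conj_index {M₀ M₁ : ℕ} {α : ℕ → ℂ} {P : ℕ → ℂ[X]}
    (hαreal : ∀ m ∈ Finset.Icc 1 M₀, (α m).im = 0)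
    (hαconj : ∀ m ∈ Finset.Icc (M₀ + 1) (M₀ + M₁), α (M₁ + m) = conj (α m))
    (hPreal : ∀ m ∈ Finset.Icc 1 M₀, ∀ k, conj ((P m).coeff k) = (P m).coeff k)
    (hPconj : ∀ m ∈ Finset.Icc (M₀ + 1) (M₀ + M₁), ∀ k,
      (P (M₁ + m)).coeff k = conj ((P m).coeff k)) :
    ∀ m ∈ Finset.Icc 1 (M₀ + 2 * M₁), ∃ n ∈ Finset.Icc 1 (M₀ + 2 * M₁),
      α n = conj (α m) ∧ P n = (P m).map (starRingEnd ℂ) := by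
  intro m hm
  simp only [Finset.mem_Icc] at *
  obtain hreal | hupper | hlower : m ≤ M₀ ∨ (M₀ + 1 ≤ m ∧ m ≤ M₀ + M₁) ∨ M₀ + M₁ + 1 ≤ m := by lia
  · refine ⟨m, hm, (conj_eq_iff_im.2 (hαreal m ⟨hm.1, hreal⟩)).symm, Polynomial.ext fun k => ?_⟩
    rw [coeff_map, hPreal m ⟨hm.1, hreal⟩]
  · refine ⟨M₁ + m, by lia, hαconj m hupper, Polynomial.ext fun k => ?_⟩
    rw [coeff_map, hPconj m hupper]
  · obtain ⟨n, rfl⟩ : ∃ n, m = M₁ + n := ⟨m - M₁, by lia⟩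
    have hn : M₀ + 1 ≤ n ∧ n ≤ M₀ + M₁ := by lia
    refine ⟨n, by lia, by rw [hαconj n hn, conj_conj], Polynomial.ext fun k => ?_⟩
    rw [coeff_map, hPconj n hn, conj_conj]

lemma forall_im_eq_zero_and_iff {M₀ M₁ : ℕ} {α : ℕ → ℂ}
    (hαreal : ∀ m ∈ Finset.Icc 1 M₀, (α m).im = 0)
    (hαim : ∀ m ∈ Finset.Icc (M₀ + 1) (M₀ + M₁), (α m).im ≠ 0) {p : ℕ → Prop} :
    (∀ m ∈ Finset.Icc 1 (M₀ + 2 * M₁), (α m).im = 0 ∧ p m) ↔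
      M₁ = 0 ∧ ∀ m ∈ Finset.Icc 1 M₀, p m := by
  constructor
  · intro h
    obtain rfl : M₁ = 0 := by
      by_contra hM₁
      exact hαim (M₀ + 1) (Finset.mem_Icc.2 (by lia)) (h _ (Finset.mem_Icc.2 (by lia))).1
    exact ⟨rfl, fun m hm => (h m hm).2⟩
  · rintro ⟨rfl, h⟩ m hm
    exact ⟨hαreal m hm, h m hm⟩

end Indexing

/-- **Sign-definite finite rank Hankel operators** (Corollary 1.2 of Yafaev, "On finite
rank Hankel operators"): the form `Q_h` is nonnegative iff `M₁ = 0` and every real term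
is a positive multiple of a pure exponential (`K_m = 0` and `p_m > 0`), i.e.
`h(t) = Σ p_m e^{−α_m t}` with `α_m > 0`, `p_m > 0`; and likewise for nonpositivity with
`p_m < 0`. -/
theorem finite_rank_hankel_sign_definite (M₀ M₁ : ℕ) (hM : 1 ≤ M₀ + 2 * M₁)
    (α : ℕ → ℂ) (P : ℕ → Polynomial ℂ) (K : ℕ → ℕ)
    (hdist : ∀ m ∈ Finset.Icc 1 (M₀ + 2 * M₁), ∀ n ∈ Finset.Icc 1 (M₀ + 2 * M₁),
      m ≠ n → α m ≠ α n)
    (hre : ∀ m ∈ Finset.Icc 1 (M₀ + 2 * M₁), 0 < (α m).re)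
    (hαreal : ∀ m ∈ Finset.Icc 1 M₀, (α m).im = 0)
    (hαim : ∀ m ∈ Finset.Icc (M₀ + 1) (M₀ + M₁), 0 < (α m).im)
    (hαconj : ∀ m ∈ Finset.Icc (M₀ + 1) (M₀ + M₁), α (M₁ + m) = starRingEnd ℂ (α m))
    (hdeg : ∀ m ∈ Finset.Icc 1 (M₀ + 2 * M₁), (P m).degree = (K m : WithBot ℕ))
    (hPreal : ∀ m ∈ Finset.Icc 1 M₀, ∀ k : ℕ,
      starRingEnd ℂ ((P m).coeff k) = (P m).coeff k)
    (hPconj : ∀ m ∈ Finset.Icc (M₀ + 1) (M₀ + M₁), ∀ k : ℕ,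
      (P (M₁ + m)).coeff k = starRingEnd ℂ ((P m).coeff k)) :
    ((∀ f : Lp ℂ 2 halfLineMeasure, 0 ≤ hankelForm (frKernel (M₀ + 2 * M₁) α P) f) ↔
      (M₁ = 0 ∧ ∀ m ∈ Finset.Icc 1 M₀, K m = 0 ∧ 0 < (P m).leadingCoeff.re)) ∧
    ((∀ f : Lp ℂ 2 halfLineMeasure, hankelForm (frKernel (M₀ + 2 * M₁) α P) f ≤ 0) ↔
      (M₁ = 0 ∧ ∀ m ∈ Finset.Icc 1 M₀, K m = 0 ∧ (P m).leadingCoeff.re < 0)) := by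
  have hα : Set.InjOn α (Finset.Icc 1 (M₀ + 2 * M₁)) := fun m hm n hn h =>
    by_contra fun hmn => hdist m hm n hn hmn h
  have hP (m) (hm : m ∈ Finset.Icc 1 (M₀ + 2 * M₁)) : P m ≠ 0 :=
    degree_ne_bot.1 (hdeg m hm ▸ WithBot.coe_ne_bot)
  let R : ℂ →₀ ℂ[X] := ∑ m ∈ Finset.Icc 1 (M₀ + 2 * M₁), Finsupp.single (α m) (P m)
  have hkernel : frKernel (M₀ + 2 * M₁) α P = expPolyKernel R :=
    funext fun t => (expPolyKernel_sum_single _ α P t).symm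
  have hR : IsConjInvariant R :=
    isConjInvariant_sum_single hα (exists_conj_index hαreal hαconj hPreal hPconj)
  have hRre : ∀ a ∈ R.support, 0 < a.re :=
    (forall_mem_support_sum_single_iff hα hP (p := fun a _ => 0 < a.re)).2 hre
  have hcoeff (q : ℝ → Prop) :
      (∀ a ∈ R.support, a.im = 0 ∧ (R a).natDegree = 0 ∧ q (R a).leadingCoeff.re) ↔
        M₁ = 0 ∧ ∀ m ∈ Finset.Icc 1 M₀, K m = 0 ∧ q (P m).leadingCoeff.re := by
    rw [forall_mem_support_sum_single_iff hα hP
        (p := fun a Q => a.im = 0 ∧ Q.natDegree = 0 ∧ q Q.leadingCoeff.re),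
      ← forall_im_eq_zero_and_iff hαreal fun m hm => (hαim m hm).ne']
    exact forall₂_congr fun m hm => by rw [natDegree_eq_of_degree_eq_some (hdeg m hm)]
  rw [hkernel, hankelForm_nonneg_iff hRre hR, hankelForm_nonpos_iff hRre hR]
  exact ⟨hcoeff (0 < ·), hcoeff (· < 0)⟩

end
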